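/- Let K be a field, V' a K-vector space, V ⊆ V' a K-subspace such that the quotient V'/V has infinite dimension over K (Module.rank K (V'⧸V) ≥ ℵ₀), S a set of monic irreducible polynomials over K, and c : S → ℕ a function. If θ : V → V is a K-linear endomorphism such that ker((f^{c(f)})(θ)) = ker((f^{c(f)+1})(θ)) for every f ∈ S, then there exists a K-linear endomorphism θ' : V' → V' extending θ (θ'(v) = θ(v) for all v ∈ V) such that ker((f^{c(f)})(θ')) = ker((f^{c(f)+1})(θ')) for every f ∈ S. -/

import Mathlib

/-!
An endomorphism `φ` of `V' ⧸ V` for which the `K[X]`-module `Module.AEval' φ` is free exists because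
a vector space with an infinite basis `ι` has the same dimension as `ι →₀ K[X]`. The extension
`0 → V → V' → V' ⧸ V → 0` splits, so some `θ'` restricts to `θ` and induces `φ`. For `p ≠ 0` the map
`p(φ)` is injective, which traps `ker p(θ')` inside `V`; hence `ker p(θ') = ker p(θ)`.
-/

open Polynomial Module

section ShortExact

variable {R N M P N' M' P' : Type*} [Ring R]
  [AddCommGroup N] [Module R N] [AddCommGroup M] [Module R M] [AddCommGroup P] [Module R P]
  [AddCommGroup N'] [Module R N'] [AddCommGroup M'] [Module R M'] [AddCommGroup P'] [Module R P']
  {f : N →ₗ[R] M} {g : M →ₗ[R] P} {f' : N' →ₗ[R] M'} {g' : M' →ₗ[R] P'}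
  {α : N →ₗ[R] N'} {β : M →ₗ[R] M'} {γ : P →ₗ[R] P'}

variable (α γ) in
theorem exists_comp_eq_comp_of_projective [Projective R P]
    (hfg : Function.Exact f g) (hf : Function.Injective f) (hg : Function.Surjective g)
    (hfg' : g' ∘ₗ f' = 0) (hg' : Function.Surjective g') :
    ∃ β : M →ₗ[R] M', β ∘ₗ f = f' ∘ₗ α ∧ g' ∘ₗ β = γ ∘ₗ g := by
  have exists_section : ∃ s : P →ₗ[R] M, g ∘ₗ s = .id := projective_lifting_property g .id hg
  obtain ⟨r, hr⟩ : ∃ r : M →ₗ[R] N, r ∘ₗ f = .id :=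
    ((hfg.split_tfae hf hg).out 0 1 rfl rfl).mp exists_section
  obtain ⟨γ', hγ'⟩ := projective_lifting_property g' γ hg'
  refine ⟨f' ∘ₗ α ∘ₗ r + γ' ∘ₗ g, ?_, ?_⟩
  · simp only [LinearMap.add_comp, LinearMap.comp_assoc, hr, hfg.linearMap_comp_eq_zero,
      LinearMap.comp_id, LinearMap.comp_zero, add_zero]
  · simp only [LinearMap.comp_add, ← LinearMap.comp_assoc, hfg', hγ',
      LinearMap.zero_comp, zero_add]

theorem ker_eq_map_ker_of_exact (hfg : Function.Exact f g) (hf' : Function.Injective f')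
    (hαβ : β ∘ₗ f = f' ∘ₗ α) (hβγ : g' ∘ₗ β = γ ∘ₗ g) (hγ : Function.Injective γ) :
    LinearMap.ker β = (LinearMap.ker α).map f := by
  have ker_le_range : LinearMap.ker β ≤ LinearMap.range f :=
    calc LinearMap.ker β ≤ LinearMap.ker (g' ∘ₗ β) := LinearMap.ker_le_ker_comp β g'
      _ = LinearMap.ker g := by
        rw [hβγ, LinearMap.ker_comp_of_ker_eq_bot _ (LinearMap.ker_eq_bot.mpr hγ)]
      _ = LinearMap.range f := hfg.linearMap_ker_eq
  calc LinearMap.ker β = ((LinearMap.ker β).comap f).map f :=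
        (Submodule.map_comap_eq_self ker_le_range).symm
    _ = (LinearMap.ker (f' ∘ₗ α)).map f := by rw [← LinearMap.ker_comp, hαβ]
    _ = (LinearMap.ker α).map f := by
        rw [LinearMap.ker_comp_of_ker_eq_bot _ (LinearMap.ker_eq_bot.mpr hf')]

end ShortExact

section PolynomialAction

variable {R M N ι : Type*}

theorem aeval_comp_eq_comp_aeval [CommSemiring R] [AddCommMonoid M] [Module R M]
    [AddCommMonoid N] [Module R N] {f : M →ₗ[R] N} {α : End R M} {β : End R N}
    (h : β ∘ₗ f = f ∘ₗ α) (p : R[X]) : aeval β p ∘ₗ f = f ∘ₗ aeval α p := by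
  let f' : AEval' α →ₗ[R[X]] AEval' β :=
    .ofAEval α ((AEval'.of β).toLinearMap ∘ₗ f) fun m => by
      simpa [AEval'.X_smul_of] using (LinearMap.congr_fun h m).symm
  ext m
  exact (map_smul f' p (AEval'.of α m)).symm

theorem aeval_injective_of_isRegular [CommSemiring R] [AddCommMonoid M] [Module R M]
    {φ : End R M} [IsTorsionFree R[X] (AEval' φ)] {p : R[X]} (hp : IsRegular p) :
    Function.Injective (aeval φ p) :=
  hp.smul_right_injective (M := AEval' φ)

theorem exists_end_free_aeval_of_basis [CommSemiring R] [AddCommMonoid M] [Module R M]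
    [Infinite ι] (b : Basis ι R M) : ∃ φ : End R M, Free R[X] (AEval' φ) := by
  obtain ⟨σ⟩ : Nonempty (ι ≃ Σ _ : ι, ℕ) := by
    rw [← Cardinal.eq]
    simp
  let e : M ≃ₗ[R] (ι →₀ R[X]) := b.equiv (Finsupp.basis fun _ => basisMonomials R) σ
  let φ : End R M := e.symm.conj (Algebra.lsmul R R (ι →₀ R[X]) (X : R[X]))
  have e_map_φ (m : M) : e (φ m) = (X : R[X]) • e m := by simp [φ, LinearEquiv.conj_apply]
  exact ⟨φ, Free.of_equiv (LinearEquiv.ofAEval φ e e_map_φ).symm⟩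

theorem exists_end_free_aeval [CommRing R] [Nontrivial R] [AddCommGroup M] [Module R M]
    [Free R M] (hM : Cardinal.aleph0 ≤ Module.rank R M) :
    ∃ φ : End R M, Free R[X] (AEval' φ) := by
  have : Infinite (Free.ChooseBasisIndex R M) := by
    rwa [Cardinal.infinite_iff, ← Free.rank_eq_card_chooseBasisIndex]
  exact exists_end_free_aeval_of_basis (Free.chooseBasis R M)

end PolynomialAction

theorem extend_endomorphism_transcendental_general {R M : Type*} [CommRing R] [Nontrivial R]
    [AddCommGroup M] [Module R M] (V : Submodule R M) [Free R (M ⧸ V)]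
    (hrank : Cardinal.aleph0 ≤ Module.rank R (M ⧸ V)) (θ : End R V) :
    ∃ θ' : End R M, (∀ v : V, θ' v = θ v) ∧
      ∀ p : R[X], IsRegular p →
        LinearMap.ker (aeval θ' p) = (LinearMap.ker (aeval θ p)).map V.subtype := by
  obtain ⟨φ, hφ⟩ := exists_end_free_aeval hrank
  have exact_row : Function.Exact V.subtype V.mkQ := LinearMap.exact_subtype_mkQ V
  obtain ⟨θ', hθ, hφ'⟩ := exists_comp_eq_comp_of_projective θ φ exact_row V.subtype_injective
    V.mkQ_surjective exact_row.linearMap_comp_eq_zero V.mkQ_surjective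
  refine ⟨θ', LinearMap.congr_fun hθ, fun p hp => ?_⟩
  exact ker_eq_map_ker_of_exact exact_row V.subtype_injective (aeval_comp_eq_comp_aeval hθ p)
    (aeval_comp_eq_comp_aeval hφ'.symm p).symm (aeval_injective_of_isRegular hp)

/-- Standard Construction, transcendental case: a `K`-linear
endomorphism `θ` of a subspace `V ⊆ V'` with `dim(V'/V) ≥ ℵ₀` satisfying the
kernel stabilization conditions `ker((f^{c f})(θ)) = ker((f^{c f + 1})(θ))` for
all `f` in a set `S` of monic irreducible polynomials extends to a `K`-linear
endomorphism `θ'` of `V'` satisfying the same kernel stabilization conditions. -/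
theorem extend_endomorphism_transcendental
    {K V' : Type*} [Field K] [AddCommGroup V'] [Module K V']
    (V : Submodule K V')
    (hrank : Cardinal.aleph0 ≤ Module.rank K (V' ⧸ V))
    (S : Set (Polynomial K)) (hS : ∀ f ∈ S, f.Monic ∧ Irreducible f)
    (c : Polynomial K → ℕ)
    (θ : V →ₗ[K] V)
    (hθ : ∀ f ∈ S, LinearMap.ker (Polynomial.aeval θ (f ^ c f)) =
      LinearMap.ker (Polynomial.aeval θ (f ^ (c f + 1)))) :
    ∃ θ' : V' →ₗ[K] V',
      (∀ v : V, θ' ↑v = ↑(θ v)) ∧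
      ∀ f ∈ S, LinearMap.ker (Polynomial.aeval θ' (f ^ c f)) =
        LinearMap.ker (Polynomial.aeval θ' (f ^ (c f + 1))) := by
  obtain ⟨θ', hext, hker⟩ := extend_endomorphism_transcendental_general V hrank θ
  refine ⟨θ', hext, fun f hf => ?_⟩
  have pow_isRegular (n : ℕ) : IsRegular (f ^ n) := (hS f hf).1.isRegular.pow n
  rw [hker _ (pow_isRegular _), hker _ (pow_isRegular _), hθ f hf]
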